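/- Let H be a Hopf monoid in a braided monoidal category C, δ a character and σ a cocharacter of H. Then the following are equivalent: (i) δ ∘ σ = id_𝟙 and σ ∘ δ = ((m ∘ (S ⊗ m)) ⊗ δ) ∘ (ψ_{H⊗H,H} ⊗ 1_H) ∘ (1_{H⊗H} ⊗ ψ_{H,H}) ∘ (σ ⊗ Δ²) as morphisms H → H (suppressing unitors/associators), where Δ² := (1_H ⊗ Δ) ∘ Δ — i.e. the unit object 𝟙, with right action given by δ and left coaction given by σ, is a braided stable anti-Yetter–Drinfeld module over H; (ii) (δ, σ) is a braided modular pair in involution, i.e. δ ∘ σ = id_𝟙 and the morphism H → H given (suppressing unitors) by m ∘ (m ⊗ 1_H) ∘ ((S ∘ σ) ⊗ (S̃ ∘ S̃) ⊗ σ) equals id_H. -/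

import Mathlib

open CategoryTheory MonoidalCategory

universe v u

/-- A Hopf algebra object (a "braided Hopf algebra") in a braided monoidal category `C`,
consisting of an object `X` with multiplication `mul`, unit `one`, comultiplication
`comul`, counit `counit` and antipode `antipode`, satisfying the usual axioms, with
the compatibility of `mul` and `comul` expressed via the braiding. -/
structure HopfObj (C : Type u) [Category.{v} C] [MonoidalCategory C]
    [BraidedCategory C] where
  X : C
  mul : X ⊗ X ⟶ X
  one : 𝟙_ C ⟶ X
  comul : X ⟶ X ⊗ X
  counit : X ⟶ 𝟙_ C
  antipode : X ⟶ X
  mul_assoc : (mul ▷ X) ≫ mul = (α_ X X X).hom ≫ (X ◁ mul) ≫ mul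
  one_mul : (one ▷ X) ≫ mul = (λ_ X).hom
  mul_one : (X ◁ one) ≫ mul = (ρ_ X).hom
  comul_assoc : comul ≫ (comul ▷ X) ≫ (α_ X X X).hom = comul ≫ (X ◁ comul)
  counit_comul : comul ≫ (counit ▷ X) = (λ_ X).inv
  comul_counit : comul ≫ (X ◁ counit) = (ρ_ X).inv
  mul_comul : mul ≫ comul =
      (comul ⊗ₘ comul) ≫ (α_ X X (X ⊗ X)).hom ≫ (X ◁ (α_ X X X).inv) ≫
        (X ◁ ((β_ X X).hom ▷ X)) ≫ (X ◁ (α_ X X X).hom) ≫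
        (α_ X X (X ⊗ X)).inv ≫ (mul ⊗ₘ mul)
  one_comul : one ≫ comul = (λ_ (𝟙_ C)).inv ≫ (one ⊗ₘ one)
  mul_counit : mul ≫ counit = (counit ⊗ₘ counit) ≫ (λ_ (𝟙_ C)).hom
  one_counit : one ≫ counit = 𝟙 (𝟙_ C)
  antipode_left : comul ≫ (antipode ▷ X) ≫ mul = counit ≫ one
  antipode_right : comul ≫ (X ◁ antipode) ≫ mul = counit ≫ one

variable {C : Type u} [Category.{v} C] [MonoidalCategory C] [BraidedCategory C]

/-- The `δ`-twisted antipode `S̃ = λ_H ∘ (δ ⊗ S) ∘ Δ`. -/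
def HopfObj.twist (A : _root_.HopfObj C) (δ : A.X ⟶ 𝟙_ C) : A.X ⟶ A.X :=
  A.comul ≫ (δ ⊗ₘ A.antipode) ≫ (λ_ A.X).hom

/-- `δ : H ⟶ 𝟙` is a character, i.e. a morphism of monoid objects. -/
def HopfObj.IsCharacter (A : _root_.HopfObj C) (δ : A.X ⟶ 𝟙_ C) : Prop :=
  A.mul ≫ δ = (δ ⊗ₘ δ) ≫ (λ_ (𝟙_ C)).hom ∧ A.one ≫ δ = 𝟙 (𝟙_ C)

/-- `σ : 𝟙 ⟶ H` is a cocharacter, i.e. a morphism of comonoid objects. -/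
def HopfObj.IsCocharacter (A : _root_.HopfObj C) (σ : 𝟙_ C ⟶ A.X) : Prop :=
  σ ≫ A.comul = (λ_ (𝟙_ C)).inv ≫ (σ ⊗ₘ σ) ∧ σ ≫ A.counit = 𝟙 (𝟙_ C)

/-- The morphism `m ∘ (m ⊗ 1_H) ∘ ((S ∘ σ) ⊗ (S̃ ∘ S̃) ⊗ σ) : H ⟶ H`
(with unitors inserted). -/
def HopfObj.bmpiMap (A : _root_.HopfObj C) (δ : A.X ⟶ 𝟙_ C) (σ : 𝟙_ C ⟶ A.X) :
    A.X ⟶ A.X :=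
  (λ_ A.X).inv ≫ ((σ ≫ A.antipode) ⊗ₘ (A.twist δ ≫ A.twist δ)) ≫
    (ρ_ (A.X ⊗ A.X)).inv ≫ ((A.X ⊗ A.X) ◁ σ) ≫ (A.mul ▷ A.X) ≫ A.mul

/-- `(δ, σ)` is a braided modular pair in involution. -/
def HopfObj.IsBMPI (A : _root_.HopfObj C) (δ : A.X ⟶ 𝟙_ C) (σ : 𝟙_ C ⟶ A.X) : Prop :=
  σ ≫ δ = 𝟙 (𝟙_ C) ∧ A.bmpiMap δ σ = 𝟙 A.X

namespace BMPIAux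

open scoped MonObj ComonObj
open CategoryTheory.HopfObj

section
variable {D : Type u} [Category.{v} D] [MonoidalCategory D] [BraidedCategory D]

/-- The co-opposite comonoid. -/
abbrev cop (H : D) [ComonObj H] : ComonObj H where
  counit := ε[H]
  comul := Δ[H] ≫ (β_ H H).hom
  counit_comul := by
    rw [Category.assoc, ← BraidedCategory.braiding_naturality_right, ComonObj.comul_counit_assoc]
    simp
  comul_counit := by
    rw [Category.assoc, ← BraidedCategory.braiding_naturality_left, ComonObj.counit_comul_assoc]
    simp
  comul_assoc := by
    have h1 : Δ[H] ≫ (β_ H H).hom ≫ H ◁ Δ[H] = Δ[H] ≫ Δ[H] ▷ H ≫ (β_ (H ⊗ H) H).hom := by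
      rw [BraidedCategory.braiding_naturality_left]
    have h2 : Δ[H] ≫ (β_ H H).hom ≫ Δ[H] ▷ H = Δ[H] ≫ H ◁ Δ[H] ≫ (β_ H (H ⊗ H)).hom := by
      rw [BraidedCategory.braiding_naturality_right]
    simp only [Category.assoc, whiskerLeft_comp, comp_whiskerRight]
    rw [reassoc_of% h1, reassoc_of% h2, ComonObj.comul_assoc_assoc,
      BraidedCategory.braiding_tensor_left_hom, BraidedCategory.braiding_tensor_right_hom]
    simp only [Category.assoc, Iso.hom_inv_id_assoc]
    rw [← BraidedCategory.yang_baxter]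
    simp

variable {H : D} [CategoryTheory.HopfObj H]

/-- Braided convolution. -/
def star (f g : H ⟶ H) : H ⟶ H := Δ[H] ≫ (β_ H H).hom ≫ (f ⊗ₘ g) ≫ μ[H]

theorem star_assoc (f g h : H ⟶ H) : star (star f g) h = star f (star g h) := by
  have key := @mul_assoc (Conv H H) (@Conv.instMonoid D _ _ H H (cop H) _).toSemigroup f g h
  have e : ∀ a b : H ⟶ H, star a b =
      (@Conv.instMonoid D _ _ H H (cop H) _).toSemigroup.toMul.mul a b := by
    intro a b
    rw [star, MonoidalCategory.tensorHom_def]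
    simp only [Category.assoc]
    exact (Category.assoc _ _ _).symm
  rw [e f g, e g h]
  exact (e _ h).trans (key.trans (e f _).symm)

/-- left mult -/
def L (s : 𝟙_ D ⟶ H) : H ⟶ H := (λ_ H).inv ≫ s ▷ H ≫ μ[H]
/-- right mult -/
def R (s : 𝟙_ D ⟶ H) : H ⟶ H := (ρ_ H).inv ≫ H ◁ s ≫ μ[H]

theorem L_L (s t : 𝟙_ D ⟶ H) : L s ≫ L t = L ((λ_ _).inv ≫ (t ⊗ₘ s) ≫ μ[H]) := by
  have : (t ⊗ₘ s) ▷ H ≫ μ[H] ▷ H ≫ μ[H] =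
      (α_ _ _ _).hom ≫ (𝟙_ D) ◁ (s ▷ H ≫ μ[H]) ≫ t ▷ H ≫ μ[H] := by
    rw [MonObj.mul_assoc, ← tensorHom_id, associator_naturality_assoc, ← id_tensorHom,
      tensorHom_comp_tensorHom_assoc, Category.comp_id, tensorHom_id,
      MonoidalCategory.tensorHom_def', Category.assoc]
  simp only [L, comp_whiskerRight, Category.assoc]
  rw [this]
  simp only [whiskerLeft_comp, Category.assoc]
  rw [leftUnitor_inv_naturality_assoc, leftUnitor_inv_naturality_assoc]
  simp

theorem mul_R (t : 𝟙_ D ⟶ H) : μ[H] ≫ R t = H ◁ R t ≫ μ[H] := by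
  simp only [R]
  rw [rightUnitor_inv_naturality_assoc, ← whisker_exchange_assoc, MonObj.mul_assoc]
  simp

theorem L_R (s t : 𝟙_ D ⟶ H) : L s ≫ R t = R t ≫ L s := by
  rw [L, Category.assoc, Category.assoc, mul_R, ← whisker_exchange_assoc,
    ← leftUnitor_inv_naturality_assoc]

theorem L_one : L η[H] = 𝟙 H := by simp [L]

theorem one_R (s : 𝟙_ D ⟶ H) : η[H] ≫ R s = s := by
  rw [R, rightUnitor_inv_naturality_assoc, ← whisker_exchange_assoc, MonObj.one_mul]
  simp [← unitors_inv_equal]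

theorem star_R (f g : H ⟶ H) (s : 𝟙_ D ⟶ H) : star f (g ≫ R s) = star f g ≫ R s := by
  simp only [star, Category.assoc, mul_R]
  rw [← id_tensorHom, tensorHom_comp_tensorHom_assoc, Category.comp_id]

variable (δ : H ⟶ 𝟙_ D)

/-- twisted antipode -/
def tw : H ⟶ H := Δ[H] ≫ (δ ⊗ₘ 𝒮[H]) ≫ (λ_ H).hom

variable {δ}

theorem mul_tw (h : μ[H] ≫ δ = (δ ⊗ₘ δ) ≫ (λ_ _).hom) :
    μ[H] ≫ tw δ = (tw δ ⊗ₘ tw δ) ≫ (β_ H H).hom ≫ μ[H] := by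
  simp only [tw, ← tensorHom_comp_tensorHom, Category.assoc]
  rw [BimonObj.mul_comul_assoc, tensorHom_comp_tensorHom_assoc, h, CategoryTheory.HopfObj.mul_antipode,
    ← tensorHom_comp_tensorHom_assoc, leftUnitor_monoidal]
  simp only [Category.assoc]
  rw [tensorμ_natural_assoc]
  congr 3
  rw [MonoidalCategory.tensorHom_def]
  simp

theorem one_tw (h : η[H] ≫ δ = 𝟙 _) : η[H] ≫ tw δ = η[H] := by
  rw [tw, Bimon.one_comul_assoc, tensorHom_comp_tensorHom_assoc, h, one_antipode]
  simp

/-- `(δ ▷)` acting on a map -/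
theorem tw_mul : Δ[H] ≫ tw δ ▷ H ≫ μ[H] = δ ≫ η[H] := by
  have : tw δ ▷ H = Δ[H] ▷ H ≫ (α_ _ _ _).hom ≫ H ◁ 𝒮[H] ▷ H ≫ δ ▷ (H ⊗ H) ≫ (λ_ _).hom := by
    rw [tw, MonoidalCategory.tensorHom_def']
    simp
  rw [this]
  simp only [Category.assoc]
  rw [← ComonObj.comul_assoc_assoc, ← leftUnitor_naturality, ← whisker_exchange_assoc,
    ← whiskerLeft_comp_assoc, ← whiskerLeft_comp_assoc, Category.assoc, antipode_left,
    whiskerLeft_comp_assoc, ComonObj.comul_counit_assoc, whisker_exchange_assoc]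
  simp [← unitors_inv_equal]

theorem tw_star (h : μ[H] ≫ δ = (δ ⊗ₘ δ) ≫ (λ_ _).hom) (h1 : η[H] ≫ δ = 𝟙 _) :
    star (tw δ) (tw δ ≫ tw δ) = δ ≫ η[H] := by
  have : (β_ H H).hom ≫ (tw δ ⊗ₘ (tw δ ≫ tw δ)) ≫ μ[H] = tw δ ▷ H ≫ μ[H] ≫ tw δ := by
    rw [mul_tw h, ← BraidedCategory.braiding_naturality_assoc]
    rw [← tensorHom_id, tensorHom_comp_tensorHom_assoc, Category.id_comp]
  rw [star, this, ← Category.assoc (tw δ ▷ H), ← Category.assoc, tw_mul, Category.assoc, one_tw h1]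

theorem star_tw : star (𝒮[H] ≫ 𝒮[H]) (tw δ) = δ ≫ η[H] := by
  have e1 : (β_ H H).hom ≫ ((𝒮[H] ≫ 𝒮[H]) ⊗ₘ tw δ) ≫ μ[H] =
      Δ[H] ▷ H ≫ (α_ _ _ _).hom ≫ δ ▷ (H ⊗ H) ≫ (λ_ _).hom ≫ H ◁ 𝒮[H] ≫ μ[H] ≫ 𝒮[H] := by
    rw [mul_antipode, ← BraidedCategory.braiding_naturality_assoc]
    have t : tw δ = (Δ[H] ≫ δ ▷ H ≫ (λ_ _).hom) ≫ 𝒮[H] := by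
      simp [tw, MonoidalCategory.tensorHom_def]
    rw [t]
    simp only [MonoidalCategory.tensorHom_def, comp_whiskerRight, whiskerLeft_comp, Category.assoc]
    rw [whisker_exchange_assoc]
    simp
  rw [star, e1, ← ComonObj.comul_assoc_assoc]
  rw [whisker_exchange_assoc, leftUnitor_naturality_assoc, antipode_right_assoc, one_antipode,
    ← leftUnitor_naturality_assoc, ← whisker_exchange_assoc, ComonObj.comul_counit_assoc]
  simp [unitors_equal]

theorem cancel_star (h : μ[H] ≫ δ = (δ ⊗ₘ δ) ≫ (λ_ _).hom) (h1 : η[H] ≫ δ = 𝟙 _)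
    {f g : H ⟶ H} (e : star (tw δ) f = star (tw δ) g) : f = g := by
  have e2 := congrArg (star (𝒮[H] ≫ 𝒮[H])) e
  rw [← star_assoc, ← star_assoc, star_tw] at e2
  have k : ∀ f : H ⟶ H, star (δ ≫ η[H]) f = Δ[H] ≫ H ◁ δ ≫ (ρ_ H).hom ≫ f := by
    intro f
    have q : ((δ ≫ η[H]) ⊗ₘ f) ≫ μ[H] = (δ ⊗ₘ f) ≫ (λ_ H).hom := by
      rw [← MonObj.one_mul, ← tensorHom_id, tensorHom_comp_tensorHom_assoc, Category.comp_id]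
    rw [star, q, ← BraidedCategory.braiding_naturality_assoc, MonoidalCategory.tensorHom_def']
    simp
  rw [k, k] at e2
  have inv : Δ[H] ≫ H ◁ (𝒮[H] ≫ δ) ≫ (ρ_ H).hom ≫ Δ[H] ≫ H ◁ δ ≫ (ρ_ H).hom = 𝟙 H := by
    have c : (α_ H H H).inv ≫ (H ⊗ H) ◁ (𝒮[H] ≫ δ) ≫ (ρ_ _).hom ≫ H ◁ δ ≫ (ρ_ H).hom =
        H ◁ ((δ ⊗ₘ (𝒮[H] ≫ δ)) ≫ (λ_ _).hom) ≫ (ρ_ H).hom := by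
      rw [← rightUnitor_naturality_assoc, MonoidalCategory.tensorHom_def']
      monoidal
    have d : Δ[H] ≫ (δ ⊗ₘ (𝒮[H] ≫ δ)) ≫ (λ_ _).hom = ε[H] := by
      have e := congrArg (· ≫ δ) (antipode_right H)
      simp only [Category.assoc, h, h1, Category.comp_id] at e
      rw [← e, ← id_tensorHom, tensorHom_comp_tensorHom_assoc, Category.id_comp]
    rw [← rightUnitor_naturality_assoc, whisker_exchange_assoc, ComonObj.comul_assoc_flip_assoc,
      c, ← whiskerLeft_comp_assoc, d]
    simp
  rw [← Category.id_comp f, ← Category.id_comp g, ← inv]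
  simp only [Category.assoc, e2]

variable {σ : 𝟙_ D ⟶ H}

theorem sσ (h : σ ≫ Δ[H] = (λ_ (𝟙_ D)).inv ≫ (σ ⊗ₘ σ)) (h1 : σ ≫ ε[H] = 𝟙 _) :
    (λ_ _).inv ≫ ((σ ≫ 𝒮[H]) ⊗ₘ σ) ≫ μ[H] = η[H] := by
  have := congrArg (σ ≫ ·) (antipode_left H)
  simp only [reassoc_of% h, reassoc_of% h1] at this
  rw [← this, ← tensorHom_id, tensorHom_comp_tensorHom_assoc, Category.comp_id]

theorem σs (h : σ ≫ Δ[H] = (λ_ (𝟙_ D)).inv ≫ (σ ⊗ₘ σ)) (h1 : σ ≫ ε[H] = 𝟙 _) :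
    (λ_ _).inv ≫ (σ ⊗ₘ (σ ≫ 𝒮[H])) ≫ μ[H] = η[H] := by
  have := congrArg (σ ≫ ·) (antipode_right H)
  simp only [reassoc_of% h, reassoc_of% h1] at this
  rw [← this, ← id_tensorHom, tensorHom_comp_tensorHom_assoc, Category.comp_id]

theorem bmpi_eq (s t : 𝟙_ D ⟶ H) (f : H ⟶ H) :
    (λ_ H).inv ≫ (s ⊗ₘ f) ≫ (ρ_ (H ⊗ H)).inv ≫ ((H ⊗ H) ◁ t) ≫ (μ[H] ▷ H) ≫ μ[H] =
      f ≫ L s ≫ R t := by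
  rw [L, R, MonoidalCategory.tensorHom_def', whisker_exchange_assoc]
  simp only [Category.assoc]
  rw [← rightUnitor_inv_naturality_assoc, leftUnitor_inv_naturality_assoc]

theorem sayd_eq :
    (λ_ H).inv ≫ (σ ⊗ₘ (Δ[H] ≫ (H ◁ Δ[H]))) ≫
            (H ◁ (H ◁ (β_ H H).hom)) ≫
            (α_ H H (H ⊗ H)).inv ≫ (α_ (H ⊗ H) H H).inv ≫
            ((β_ (H ⊗ H) H).hom ▷ H) ≫
            (((𝒮[H] ⊗ₘ μ[H]) ≫ μ[H]) ⊗ₘ δ) ≫ (ρ_ H).hom = star (tw δ) (L σ) := by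
  have e0 : ((β_ (H ⊗ H) H).hom ▷ H) ≫ (((𝒮[H] ⊗ₘ μ[H]) ≫ μ[H]) ⊗ₘ δ) ≫ (ρ_ H).hom =
      ((H ⊗ H) ⊗ H) ◁ δ ≫ (ρ_ _).hom ≫ (μ[H] ⊗ₘ 𝒮[H]) ≫ (β_ H H).hom ≫ μ[H] := by
    rw [MonoidalCategory.tensorHom_def', Category.assoc, ← whisker_exchange_assoc,
      rightUnitor_naturality, rightUnitor_naturality_assoc, BraidedCategory.braiding_naturality_assoc]
  have e1 : (β_ H H).hom ≫ H ◁ δ ≫ (ρ_ _).hom = δ ▷ H ≫ (λ_ _).hom := by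
    rw [← BraidedCategory.braiding_naturality_left_assoc]; simp
  have e2 : (H ◁ (H ◁ (β_ H H).hom)) ≫
            (α_ H H (H ⊗ H)).inv ≫ (α_ (H ⊗ H) H H).inv ≫ ((H ⊗ H) ⊗ H) ◁ δ ≫ (ρ_ _).hom =
      H ◁ H ◁ (δ ▷ H ≫ (λ_ _).hom) ≫ (α_ _ _ _).inv := by
    rw [← e1]
    simp only [whiskerLeft_comp, Category.assoc]
    monoidal
  have e3 : star (tw δ) (L σ) = Δ[H] ≫ (L σ ⊗ₘ tw δ) ≫ (β_ H H).hom ≫ μ[H] := by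
    rw [star, ← BraidedCategory.braiding_naturality_assoc]
  rw [e0, reassoc_of% e2, e3]
  have e4 : (λ_ H).inv ≫ (σ ⊗ₘ (Δ[H] ≫ (H ◁ Δ[H]))) ≫ H ◁ H ◁ (δ ▷ H ≫ (λ_ _).hom) ≫
      (α_ _ _ _).inv ≫ (μ[H] ⊗ₘ 𝒮[H]) = Δ[H] ≫ (L σ ⊗ₘ tw δ) := by
    have t : tw δ = (Δ[H] ≫ δ ▷ H ≫ (λ_ _).hom) ≫ 𝒮[H] := by
      simp [tw, MonoidalCategory.tensorHom_def]
    rw [t]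
    generalize hP : δ ▷ H ≫ (λ_ H).hom = P
    rw [MonoidalCategory.tensorHom_def', L]
    simp only [Category.assoc, whiskerLeft_comp]
    rw [← leftUnitor_inv_naturality_assoc]
    congr 1
    rw [whisker_exchange_assoc]
    simp only [MonoidalCategory.tensorHom_def, comp_whiskerRight, whiskerLeft_comp, Category.assoc]
    rw [← whisker_exchange_assoc μ[H] Δ[H], ← whisker_exchange_assoc μ[H] P]
    simp
  simp only [← Category.assoc] at e4 ⊢
  rw [e4]

theorem main (h : μ[H] ≫ δ = (δ ⊗ₘ δ) ≫ (λ_ _).hom) (h1 : η[H] ≫ δ = 𝟙 _)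
    (h' : σ ≫ Δ[H] = (λ_ (𝟙_ D)).inv ≫ (σ ⊗ₘ σ)) (h1' : σ ≫ ε[H] = 𝟙 _) :
    δ ≫ σ = star (tw δ) (L σ) ↔ (tw δ ≫ tw δ) ≫ L (σ ≫ 𝒮[H]) ≫ R σ = 𝟙 H := by
  have a1 : L (σ ≫ 𝒮[H]) ≫ L σ = 𝟙 H := by rw [L_L, σs h' h1', L_one]
  have a2 : L σ ≫ L (σ ≫ 𝒮[H]) = 𝟙 H := by rw [L_L, sσ h' h1', L_one]
  have b : star (tw δ) ((tw δ ≫ tw δ) ≫ R σ) = δ ≫ σ := by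
    rw [star_R, tw_star h h1, Category.assoc, one_R]
  rw [← b]
  constructor
  · intro e
    rw [L_R, ← Category.assoc, cancel_star h h1 e, a2]
  · intro e
    congr 1
    rw [← Category.id_comp (L σ), ← e, L_R]
    simp [a1]

end
end BMPIAux

/-- transfer -/
abbrev HopfObj.aux (A : _root_.HopfObj C) : CategoryTheory.HopfObj A.X where
  mul := A.mul
  one := A.one
  comul := A.comul
  counit := A.counit
  antipode := A.antipode
  mul_assoc := A.mul_assoc
  one_mul := A.one_mul
  mul_one := A.mul_one
  comul_assoc := A.comul_assoc.symm
  counit_comul := A.counit_comul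
  comul_counit := A.comul_counit
  mul_comul := by
    rw [A.mul_comul]; simp [tensorμ]
  one_comul := A.one_comul
  mul_counit := A.mul_counit
  one_counit := A.one_counit
  antipode_left := A.antipode_left
  antipode_right := A.antipode_right

/-- The unit object, with right action `δ` and left coaction `σ`, is a
braided stable anti-Yetter–Drinfeld module over `H` if and only if `(δ, σ)` is a braided
modular pair in involution. -/
theorem HopfObj.unit_sayd_iff_bmpi (A : _root_.HopfObj C) (δ : A.X ⟶ 𝟙_ C)
    (σ : 𝟙_ C ⟶ A.X) (hδ : A.IsCharacter δ) (hσ : A.IsCocharacter σ) :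
    (σ ≫ δ = 𝟙 (𝟙_ C) ∧
        δ ≫ σ =
          (λ_ A.X).inv ≫ (σ ⊗ₘ (A.comul ≫ (A.X ◁ A.comul))) ≫
            (A.X ◁ (A.X ◁ (β_ A.X A.X).hom)) ≫
            (α_ A.X A.X (A.X ⊗ A.X)).inv ≫ (α_ (A.X ⊗ A.X) A.X A.X).inv ≫
            ((β_ (A.X ⊗ A.X) A.X).hom ▷ A.X) ≫
            (((A.antipode ⊗ₘ A.mul) ≫ A.mul) ⊗ₘ δ) ≫ (ρ_ A.X).hom) ↔
      A.IsBMPI δ σ := by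
  let _ := A.aux
  rw [HopfObj.IsBMPI]
  refine and_congr_right fun _ => ?_
  have k := BMPIAux.main (H := A.X) hδ.1 hδ.2 hσ.1 hσ.2
  rw [← BMPIAux.sayd_eq, ← BMPIAux.bmpi_eq] at k
  exact k
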